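/- Practical bound with uniform prior: Let H have finite positive reference measure λ(H) ∈ (0,∞) and let P be the uniform probability distribution on H (density 1/λ(H)). For any probability measure D on Z, any loss ℓ : H × Z → [0,1], any measurable parametric function μ : H × Z^m → ℝ with finite positive Gibbs normalizer, and any δ ∈ (0,1], with probability at least 1−δ over S ∼ D^m, h′ ∼ P, and h ∼ Q_S (Gibbs posterior for μ), one has kl(R_S^ℓ(h) ‖ R_D^ℓ(h)) ≤ (1/m)·[ μ(h′,S) − μ(h,S) + ln(8√m/δ²) ]. -/

import Mathlib

open MeasureTheory ProbabilityTheory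

/-- The true risk `R_D^ℓ(h) = E_{z∼D} ℓ(h,z)`. -/
noncomputable def trueRisk {H Z : Type*} [MeasurableSpace Z]
    (D : Measure Z) (ℓ : H → Z → ℝ) (h : H) : ℝ :=
  ∫ z, ℓ h z ∂D

/-- The empirical risk `R_S^ℓ(h) = (1/m) Σ_{i=1}^m ℓ(h,z_i)`. -/
noncomputable def empRisk {H Z : Type*} {m : ℕ}
    (ℓ : H → Z → ℝ) (h : H) (S : Fin m → Z) : ℝ :=
  (∑ i, ℓ h (S i)) / m

/-- The binary KL divergence `kl(q‖p) = q ln(q/p) + (1−q) ln((1−q)/(1−p))`. -/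
noncomputable def binKL (q p : ℝ) : ℝ :=
  q * Real.log (q / p) + (1 - q) * Real.log ((1 - q) / (1 - p))

/-!
Let `ρ` be the density of the Gibbs posterior with respect to the prior `P`, and write
`C = 8√m`. Under `h′ ∼ P`, `S ∼ D^m`, `h ∼ Q_S`, put `X = exp (m · kl(R_S(h) ‖ R_D(h))) / ρ(h, S)`
and `Y = ρ(h′, S)`. Changing measure from `Q_S` to `P` gives
`E X = E_{h ∼ P} E_S exp (m · kl(R_S(h) ‖ R_D(h)))`, which Maurer's inequality bounds by `C`, while
`E Y = 1`. By Cauchy–Schwarz `E √(X Y) ≤ √C`, so by Markov `X Y < C / δ²` with probability at least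
`1 - δ`. The normalizers cancel in `ρ(h′, S) / ρ(h, S) = exp (μ(h, S) - μ(h′, S))`, and the bound
follows by taking logarithms.

For Maurer's inequality, convexity of `q ↦ exp (m · kl(q ‖ p))` allows the `[0, 1]`-valued losses to
be replaced by Bernoulli variables of the same mean. The resulting binomial expectation does not
depend on `p`, and monotonicity of Stirling's sequence bounds it by `8√m`.
-/

open Finset Real
open scoped ENNReal

section MaurerSum

/-- Maurer's sum `ξ(m)`: the value, independent of `p ∈ (0, 1)`, of `E exp (m · kl(B/m ‖ p))` for a
binomial variable `B` with parameters `m` and `p`. -/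
noncomputable def maurerSum (m : ℕ) : ℝ :=
  ∑ k ∈ range (m + 1), m.choose k * (((k : ℝ) / m) ^ k * (1 - (k : ℝ) / m) ^ (m - k))

theorem one_le_maurerSum (m : ℕ) : 1 ≤ maurerSum m := by
  have term_nonneg : ∀ k ∈ range (m + 1),
      0 ≤ m.choose k * (((k : ℝ) / m) ^ k * (1 - (k : ℝ) / m) ^ (m - k)) := by
    intro k hk
    have hkm : (k : ℝ) ≤ m := by exact_mod_cast Nat.lt_succ_iff.1 (mem_range.1 hk)
    have : 0 ≤ 1 - (k : ℝ) / m := sub_nonneg.2 (div_le_one_of_le₀ hkm m.cast_nonneg)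
    positivity
  calc (1 : ℝ) = m.choose 0 * ((((0 : ℕ) : ℝ) / m) ^ 0 * (1 - ((0 : ℕ) : ℝ) / m) ^ (m - 0)) := by
        simp
    _ ≤ maurerSum m := single_le_sum term_nonneg (mem_range.2 m.succ_pos)

theorem factorial_eq_stirlingSeq_mul {n : ℕ} (hn : n ≠ 0) :
    (n.factorial : ℝ) = Stirling.stirlingSeq n * (√(2 * n) * (n / exp 1) ^ n) := by
  rw [Stirling.stirlingSeq, div_mul_cancel₀]
  positivity

theorem stirlingSeq_le_of_le {m n : ℕ} (hm : m ≠ 0) (hmn : m ≤ n) :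
    Stirling.stirlingSeq n ≤ Stirling.stirlingSeq m := by
  obtain ⟨m, rfl⟩ := Nat.exists_eq_succ_of_ne_zero hm
  obtain ⟨n, rfl⟩ := Nat.exists_eq_succ_of_ne_zero (Nat.ne_zero_of_lt hmn)
  exact Stirling.stirlingSeq'_antitone (Nat.succ_le_succ_iff.1 hmn)

theorem choose_mul_pow_mul_pow_eq_stirlingSeq {k j : ℕ} (hk : k ≠ 0) (hj : j ≠ 0) :
    ((k + j).choose k : ℝ) * (((k : ℝ) / (k + j : ℕ)) ^ k * ((j : ℝ) / (k + j : ℕ)) ^ j) =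
      Stirling.stirlingSeq (k + j) / (Stirling.stirlingSeq k * Stirling.stirlingSeq j) *
        (√(k + j : ℕ) / (√2 * √k * √j)) := by
  have hk' : 0 < Stirling.stirlingSeq k :=
    (sqrt_pos.2 pi_pos).trans_le (Stirling.sqrt_pi_le_stirlingSeq hk)
  have hj' : 0 < Stirling.stirlingSeq j :=
    (sqrt_pos.2 pi_pos).trans_le (Stirling.sqrt_pi_le_stirlingSeq hj)
  have hkj : k + j ≠ 0 := by omega
  rw [Nat.cast_add_choose, factorial_eq_stirlingSeq_mul hk, factorial_eq_stirlingSeq_mul hj,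
    factorial_eq_stirlingSeq_mul hkj, sqrt_mul zero_le_two, sqrt_mul zero_le_two,
    sqrt_mul zero_le_two, div_pow, div_pow, div_pow, div_pow, div_pow, pow_add, pow_add]
  have : (0 : ℝ) < (k + j : ℕ) := by positivity
  field_simp

theorem choose_mul_pow_mul_pow_le_of_ne_zero {k j : ℕ} (hk : k ≠ 0) (hj : j ≠ 0) :
    ((k + j).choose k : ℝ) * (((k : ℝ) / (k + j : ℕ)) ^ k * ((j : ℝ) / (k + j : ℕ)) ^ j) ≤
      1 / (√2 * √k) + 1 / (√2 * √j) := by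
  have one_le_stirlingSeq {n : ℕ} (hn : n ≠ 0) : 1 ≤ Stirling.stirlingSeq n :=
    (one_le_sqrt.2 (by linarith [pi_gt_three])).trans (Stirling.sqrt_pi_le_stirlingSeq hn)
  have stirlingSeq_ratio_le :
      Stirling.stirlingSeq (k + j) / (Stirling.stirlingSeq k * Stirling.stirlingSeq j) ≤ 1 := by
    have hk1 := one_le_stirlingSeq hk
    have hj1 := one_le_stirlingSeq hj
    refine div_le_one_of_le₀ ?_ (by positivity)
    exact (stirlingSeq_le_of_le hk (Nat.le_add_right k j)).trans
      (le_mul_of_one_le_right (by positivity) hj1)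
  calc _ = _ := choose_mul_pow_mul_pow_eq_stirlingSeq hk hj
    _ ≤ √(k + j : ℕ) / (√2 * √k * √j) := mul_le_of_le_one_left (by positivity) stirlingSeq_ratio_le
    _ ≤ (√k + √j) / (√2 * √k * √j) := by
      gcongr
      rw [sqrt_le_left (by positivity), add_sq, sq_sqrt k.cast_nonneg, sq_sqrt j.cast_nonneg]
      push_cast
      linarith [show 0 ≤ 2 * √(k : ℝ) * √j by positivity]
    _ = 1 / (√2 * √k) + 1 / (√2 * √j) := by field_simp; ring

theorem choose_mul_pow_mul_pow_le (k j : ℕ) :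
    ((k + j).choose k : ℝ) * (((k : ℝ) / (k + j : ℕ)) ^ k * ((j : ℝ) / (k + j : ℕ)) ^ j) ≤
      1 / √(k + 1) + 1 / √(j + 1) := by
  rcases eq_or_ne k 0 with rfl | hk
  · rcases eq_or_ne j 0 with rfl | hj
    · norm_num
    · simp [hj]
  rcases eq_or_ne j 0 with rfl | hj
  · simp [hk]
  have sqrt_succ_le {n : ℕ} (hn : n ≠ 0) : √(n + 1 : ℝ) ≤ √2 * √n := by
    have : (1 : ℝ) ≤ n := by exact_mod_cast Nat.one_le_iff_ne_zero.2 hn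
    rw [← sqrt_mul zero_le_two]
    exact sqrt_le_sqrt (by linarith)
  refine (choose_mul_pow_mul_pow_le_of_ne_zero hk hj).trans ?_
  gcongr
  exacts [sqrt_succ_le hk, sqrt_succ_le hj]

theorem sum_range_one_div_sqrt_succ_le (n : ℕ) :
    ∑ k ∈ range n, 1 / √(k + 1 : ℝ) ≤ 2 * √n := by
  induction n with
  | zero => simp
  | succ n ih =>
    have one_div_le : 1 / √(n + 1 : ℝ) ≤ 2 * (√(n + 1 : ℝ) - √n) := by
      rw [div_le_iff₀ (by positivity)]
      nlinarith [sq_nonneg (√(n + 1 : ℝ) - √n), sq_sqrt (n.cast_nonneg (α := ℝ)),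
        sq_sqrt (show (0 : ℝ) ≤ n + 1 by positivity)]
    rw [sum_range_succ]
    push_cast
    linarith

theorem maurerSum_le (m : ℕ) : maurerSum m ≤ 4 * √(m + 1 : ℝ) := by
  have term_le : ∀ k ∈ range (m + 1),
      m.choose k * (((k : ℝ) / m) ^ k * (1 - (k : ℝ) / m) ^ (m - k)) ≤
        1 / √(k + 1) + 1 / √((m - k : ℕ) + 1) := by
    intro k hk
    obtain ⟨j, rfl⟩ := Nat.exists_eq_add_of_le (Nat.lt_succ_iff.1 (mem_range.1 hk))
    rw [Nat.add_sub_cancel_left]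
    rcases eq_or_ne (k + j) 0 with h0 | h0
    · obtain ⟨rfl, rfl⟩ := Nat.add_eq_zero_iff.1 h0
      norm_num
    · have : 1 - (k : ℝ) / (k + j : ℕ) = j / (k + j : ℕ) := by
        have : ((k + j : ℕ) : ℝ) ≠ 0 := by exact_mod_cast h0
        field_simp
        push_cast
        ring
      rw [this]
      exact choose_mul_pow_mul_pow_le k j
  have sum_reflect : ∑ k ∈ range (m + 1), 1 / √((m - k : ℕ) + 1 : ℝ) =
      ∑ k ∈ range (m + 1), 1 / √(k + 1 : ℝ) :=
    sum_range_reflect (fun k : ℕ => 1 / √(k + 1 : ℝ)) (m + 1)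
  have sum_le := sum_range_one_div_sqrt_succ_le (m + 1)
  push_cast at sum_le
  calc maurerSum m
      ≤ ∑ k ∈ range (m + 1), (1 / √(k + 1 : ℝ) + 1 / √((m - k : ℕ) + 1 : ℝ)) := sum_le_sum term_le
    _ = 2 * ∑ k ∈ range (m + 1), 1 / √(k + 1 : ℝ) := by
      rw [sum_add_distrib, sum_reflect, two_mul]
    _ ≤ 4 * √(m + 1 : ℝ) := by linarith

theorem maurerSum_le_eight_mul_sqrt {m : ℕ} (hm : m ≠ 0) : maurerSum m ≤ 8 * √m := by
  have hm1 : (1 : ℝ) ≤ m := by exact_mod_cast Nat.one_le_iff_ne_zero.2 hm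
  have sqrt_succ_le : √(m + 1 : ℝ) ≤ 2 * √m := by
    rw [sqrt_le_left (by positivity), mul_pow, sq_sqrt m.cast_nonneg]
    linarith
  linarith [maurerSum_le m]

end MaurerSum

section BinaryKL

variable {p : ℝ}

theorem binKL_eq_klFun (hp0 : p ≠ 0) (hp1 : p ≠ 1) (q : ℝ) :
    binKL q p = p * InformationTheory.klFun (q / p) +
      (1 - p) * InformationTheory.klFun ((1 - q) / (1 - p)) := by
  have : 1 - p ≠ 0 := sub_ne_zero.2 hp1.symm
  simp only [binKL, InformationTheory.klFun_apply]
  field_simp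
  ring

theorem binKL_self (p : ℝ) : binKL p p = 0 := by
  rcases eq_or_ne p 0 with rfl | hp0
  · simp [binKL]
  rcases eq_or_ne p 1 with rfl | hp1
  · simp [binKL]
  simp [binKL, hp0, sub_ne_zero.2 hp1.symm]

theorem convexOn_binKL (hp : p ∈ Set.Ioo 0 1) :
    ConvexOn ℝ (Set.Icc 0 1) fun q => binKL q p := by
  have hp1 : 0 < 1 - p := sub_pos.2 hp.2
  have convex_left : ConvexOn ℝ (Set.Icc 0 1) fun q => InformationTheory.klFun (q / p) := by
    refine ((InformationTheory.convexOn_klFun.comp_affineMap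
      (AffineMap.lineMap 0 p⁻¹)).subset (fun q hq => ?_) (convex_Icc 0 1)).congr fun q _ => ?_
    · simpa [AffineMap.lineMap_apply] using mul_nonneg hq.1 (inv_nonneg.2 hp.1.le)
    · simp [AffineMap.lineMap_apply, div_eq_mul_inv]
  have convex_right :
      ConvexOn ℝ (Set.Icc 0 1) fun q => InformationTheory.klFun ((1 - q) / (1 - p)) := by
    refine ((InformationTheory.convexOn_klFun.comp_affineMap
      (AffineMap.lineMap (1 - p)⁻¹ 0)).subset (fun q hq => ?_) (convex_Icc 0 1)).congr
        fun q _ => ?_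
    · have : 0 ≤ (1 - q) * (1 - p)⁻¹ := mul_nonneg (sub_nonneg.2 hq.2) (inv_nonneg.2 hp1.le)
      simp only [Set.mem_preimage, AffineMap.lineMap_apply, vsub_eq_sub, vadd_eq_add, smul_eq_mul,
        Set.mem_Ici]
      linarith
    · simp only [Function.comp_apply, AffineMap.lineMap_apply, vsub_eq_sub, vadd_eq_add,
        smul_eq_mul]
      congr 1
      ring
  refine ((convex_left.smul hp.1.le).add (convex_right.smul hp1.le)).congr fun q _ => ?_
  exact (binKL_eq_klFun hp.1.ne' hp.2.ne q).symm

theorem convexOn_exp_mul_binKL (hp : p ∈ Set.Ioo 0 1) {c : ℝ} (hc : 0 ≤ c) :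
    ConvexOn ℝ (Set.Icc 0 1) fun q => exp (c * binKL q p) := by
  refine ⟨convex_Icc 0 1, fun x hx y hy a b ha hb hab => ?_⟩
  have mul_binKL_le := ((convexOn_binKL hp).smul hc).2 hx hy ha hb hab
  exact (exp_le_exp.2 mul_binKL_le).trans
    (convexOn_exp.2 (Set.mem_univ _) (Set.mem_univ _) ha hb hab)

theorem pow_mul_exp_mul_log_div {n : ℕ} {q r : ℝ} (hr : 0 < r) (hq : n ≠ 0 → 0 < q) :
    r ^ n * exp (n * log (q / r)) = q ^ n := by
  rcases eq_or_ne n 0 with rfl | hn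
  · simp
  · rw [exp_nat_mul, exp_log (div_pos (hq hn) hr), ← mul_pow, mul_div_cancel₀ _ hr.ne']

theorem pow_mul_pow_mul_exp_mul_binKL (hp : p ∈ Set.Ioo 0 1) {m k : ℕ} (hk : k ≤ m) :
    p ^ k * (1 - p) ^ (m - k) * exp (m * binKL (k / m) p) =
      ((k : ℝ) / m) ^ k * (1 - (k : ℝ) / m) ^ (m - k) := by
  rcases eq_or_ne m 0 with rfl | hm
  · simp [Nat.le_zero.1 hk]
  have hmR : (0 : ℝ) < m := by positivity
  have mul_binKL : m * binKL (k / m) p =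
      k * log (k / m / p) + (m - k : ℕ) * log ((1 - k / m) / (1 - p)) := by
    rw [binKL, Nat.cast_sub hk]
    field_simp
  have left_factor : p ^ k * exp (k * log (k / m / p)) = ((k : ℝ) / m) ^ k :=
    pow_mul_exp_mul_log_div hp.1 fun _ => by positivity
  have right_factor : (1 - p) ^ (m - k) * exp ((m - k : ℕ) * log ((1 - k / m) / (1 - p))) =
      (1 - (k : ℝ) / m) ^ (m - k) := by
    refine pow_mul_exp_mul_log_div (sub_pos.2 hp.2) fun h => ?_
    rw [sub_pos, div_lt_one hmR]
    exact_mod_cast Nat.lt_of_sub_ne_zero h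
  rw [mul_binKL, exp_add, ← left_factor, ← right_factor]
  ring

end BinaryKL

section BernoulliWeight

variable {ι : Type*} [Fintype ι] [DecidableEq ι]

/-- The probability that independent Bernoulli variables with success probabilities `x i` succeed
exactly on `s`; as a function of `x`, the multiaffine interpolation weight of the vertex `s` of the
cube. -/
def bernoulliWeight (x : ι → ℝ) (s : Finset ι) : ℝ :=
  ∏ i, s.piecewise x (1 - x) i

theorem sum_prod_piecewise {R : Type*} [CommSemiring R] (f g : ι → R) :
    ∑ s : Finset ι, ∏ i, s.piecewise f g i = ∏ i, (f i + g i) := by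
  simp only [prod_piecewise, univ_inter, ← compl_eq_univ_sdiff, Fintype.prod_add]

theorem bernoulliWeight_nonneg {x : ι → ℝ} (hx : ∀ i, x i ∈ Set.Icc 0 1) (s : Finset ι) :
    0 ≤ bernoulliWeight x s :=
  prod_nonneg fun i _ => s.piecewise_cases x (1 - x) (0 ≤ ·) (hx i).1 (sub_nonneg.2 (hx i).2)

theorem sum_bernoulliWeight (x : ι → ℝ) : ∑ s, bernoulliWeight x s = 1 := by
  simp [bernoulliWeight, sum_prod_piecewise]

theorem sum_bernoulliWeight_mem (x : ι → ℝ) (i : ι) :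
    ∑ s, (if i ∈ s then bernoulliWeight x s else 0) = x i := by
  -- Killing the factor `1 - x i` kills exactly the subsets that miss `i`.
  have weight_eq (s : Finset ι) : (if i ∈ s then bernoulliWeight x s else 0) =
      ∏ j, s.piecewise x (Function.update (1 - x) i 0) j := by
    split_ifs with hi
    · refine prod_congr rfl fun j _ => ?_
      by_cases hj : j ∈ s
      · simp [hj]
      · simp [hj, ne_of_mem_of_not_mem hi hj |>.symm]
    · exact (prod_eq_zero (mem_univ i) (by simp [hi])).symm
  simp only [weight_eq, sum_prod_piecewise]
  rw [prod_eq_single i (fun j _ hj => by simp [hj]) (by simp)]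
  simp

theorem sum_bernoulliWeight_mul_card (x : ι → ℝ) :
    ∑ s, bernoulliWeight x s * #s = ∑ i, x i := by
  calc ∑ s, bernoulliWeight x s * #s
      = ∑ s, ∑ i, (if i ∈ s then bernoulliWeight x s else 0) := by
        simp [mul_comm]
    _ = ∑ i, x i := by
        rw [sum_comm]
        exact sum_congr rfl fun i _ => sum_bernoulliWeight_mem x i

theorem map_mean_le_sum_bernoulliWeight {g : ℝ → ℝ} (hg : ConvexOn ℝ (Set.Icc 0 1) g)
    {x : ι → ℝ} (hx : ∀ i, x i ∈ Set.Icc 0 1) :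
    g ((∑ i, x i) / Fintype.card ι) ≤
      ∑ s : Finset ι, bernoulliWeight x s * g (#s / Fintype.card ι) := by
  have card_div_mem (s : Finset ι) : (#s / Fintype.card ι : ℝ) ∈ Set.Icc 0 1 :=
    ⟨by positivity, div_le_one_of_le₀ (by exact_mod_cast s.card_le_univ) (by positivity)⟩
  have jensen := hg.map_sum_le (fun s _ => bernoulliWeight_nonneg hx s) (sum_bernoulliWeight x)
    fun s _ => card_div_mem s
  simpa only [smul_eq_mul, ← mul_div_assoc, ← sum_div, sum_bernoulliWeight_mul_card] using jensen

theorem bernoulliWeight_const (p : ℝ) (s : Finset ι) :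
    bernoulliWeight (fun _ => p) s = p ^ #s * (1 - p) ^ (Fintype.card ι - #s) := by
  simp [bernoulliWeight, prod_piecewise, ← compl_eq_univ_sdiff, card_compl]

theorem sum_bernoulliWeight_const_mul (p : ℝ) (a : ℕ → ℝ) :
    ∑ s : Finset ι, bernoulliWeight (fun _ => p) s * a #s =
      ∑ k ∈ range (Fintype.card ι + 1),
        (Fintype.card ι).choose k * (p ^ k * (1 - p) ^ (Fintype.card ι - k) * a k) := by
  simpa [bernoulliWeight_const] using sum_powerset_apply_card (x := (univ : Finset ι))
    fun k => p ^ k * (1 - p) ^ (Fintype.card ι - k) * a k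

section Integral

variable {E : ι → Type*} {mE : ∀ i, MeasurableSpace (E i)} {D : ∀ i, Measure (E i)}
  [∀ i, IsProbabilityMeasure (D i)] {f : ∀ i, E i → ℝ}

theorem bernoulliWeight_apply_eq (s : Finset ι) (S : ∀ i, E i) :
    bernoulliWeight (fun i => f i (S i)) s = ∏ i, s.piecewise f (fun i => 1 - f i) i (S i) :=
  prod_congr rfl fun i _ => by by_cases hi : i ∈ s <;> simp [hi]

theorem integrable_bernoulliWeight (hf : ∀ i, Integrable (f i) (D i)) (s : Finset ι) :
    Integrable (fun S => bernoulliWeight (fun i => f i (S i)) s) (Measure.pi D) := by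
  simp only [bernoulliWeight_apply_eq]
  exact Integrable.fintype_prod_dep fun i => s.piecewise_cases f (fun i => 1 - f i)
    (Integrable · (D i)) (hf i) ((integrable_const 1).sub (hf i))

theorem integral_bernoulliWeight (hf : ∀ i, Integrable (f i) (D i)) (s : Finset ι) :
    ∫ S, bernoulliWeight (fun i => f i (S i)) s ∂Measure.pi D =
      bernoulliWeight (fun i => ∫ z, f i z ∂D i) s := by
  simp only [bernoulliWeight_apply_eq, integral_fintype_prod_eq_prod]
  refine prod_congr rfl fun i _ => ?_
  by_cases hi : i ∈ s
  · simp [hi]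
  · simp [hi, integral_sub (integrable_const 1) (hf i)]

end Integral

end BernoulliWeight

section EmpiricalMean

variable {ι Z : Type*} [Fintype ι] [MeasurableSpace Z] {D : Measure Z} [IsProbabilityMeasure D]
  {f : Z → ℝ}

theorem lintegral_map_mean_le (hf : Integrable f D) (hf01 : ∀ z, f z ∈ Set.Icc 0 1)
    {g : ℝ → ℝ} (hg : ConvexOn ℝ (Set.Icc 0 1) g) (hg0 : ∀ q, 0 ≤ g q) :
    ∫⁻ S, ENNReal.ofReal (g ((∑ i, f (S i)) / Fintype.card ι)) ∂Measure.pi (fun _ : ι => D) ≤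
      ENNReal.ofReal (∑ k ∈ range (Fintype.card ι + 1), (Fintype.card ι).choose k *
        ((∫ z, f z ∂D) ^ k * (1 - ∫ z, f z ∂D) ^ (Fintype.card ι - k) *
          g (k / Fintype.card ι))) := by
  classical
  have integrable_weight (s : Finset ι) :
      Integrable (fun S => bernoulliWeight (fun i => f (S i)) s * g (#s / Fintype.card ι))
        (Measure.pi fun _ : ι => D) :=
    (integrable_bernoulliWeight (fun _ => hf) s).mul_const _
  calc ∫⁻ S, ENNReal.ofReal (g ((∑ i, f (S i)) / Fintype.card ι)) ∂Measure.pi (fun _ : ι => D)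
      ≤ ∫⁻ S, ENNReal.ofReal (∑ s : Finset ι, bernoulliWeight (fun i => f (S i)) s *
          g (#s / Fintype.card ι)) ∂Measure.pi (fun _ : ι => D) :=
        lintegral_mono fun S => ENNReal.ofReal_le_ofReal
          (map_mean_le_sum_bernoulliWeight hg fun i => hf01 (S i))
    _ = ENNReal.ofReal (∫ S, ∑ s : Finset ι, bernoulliWeight (fun i => f (S i)) s *
          g (#s / Fintype.card ι) ∂Measure.pi (fun _ : ι => D)) := by
        refine (ofReal_integral_eq_lintegral_ofReal
          (integrable_finsetSum _ fun s _ => integrable_weight s) (.of_forall fun S => ?_)).symm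
        exact sum_nonneg fun s _ =>
          mul_nonneg (bernoulliWeight_nonneg (fun i => hf01 (S i)) s) (hg0 _)
    _ = _ := by
        simp only [integral_finsetSum _ fun s _ => integrable_weight s, integral_mul_const,
          integral_bernoulliWeight (fun _ => hf)]
        rw [sum_bernoulliWeight_const_mul _ fun k => g (k / Fintype.card ι)]

theorem lintegral_exp_mul_binKL_mean_le_of_ae_eq_const {c : ℝ} (hfc : f =ᵐ[D] fun _ => c) :
    ∫⁻ S, ENNReal.ofReal (exp (Fintype.card ι *
      binKL ((∑ i, f (S i)) / Fintype.card ι) (∫ z, f z ∂D))) ∂Measure.pi (fun _ : ι => D) ≤ 1 := by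
  have mean_eq : ∫ z, f z ∂D = c := by simp [integral_congr_ae hfc]
  have sample_eq : ∀ᵐ S ∂Measure.pi (fun _ : ι => D), ∀ i, f (S i) = c :=
    ae_all_iff.2 fun i =>
      (measurePreserving_eval (fun _ : ι => D) i).quasiMeasurePreserving.ae hfc
  calc _ ≤ ∫⁻ _, 1 ∂Measure.pi (fun _ : ι => D) := by
        refine lintegral_mono_ae ?_
        filter_upwards [sample_eq] with S hS
        rcases isEmpty_or_nonempty ι with hι | hι
        · simp
        · simp [hS, mean_eq, binKL_self]
    _ = 1 := by simp

theorem lintegral_exp_mul_binKL_mean_le (hf : AEStronglyMeasurable f D)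
    (hf01 : ∀ z, f z ∈ Set.Icc 0 1) :
    ∫⁻ S, ENNReal.ofReal (exp (Fintype.card ι *
      binKL ((∑ i, f (S i)) / Fintype.card ι) (∫ z, f z ∂D))) ∂Measure.pi (fun _ : ι => D) ≤
        ENNReal.ofReal (maurerSum (Fintype.card ι)) := by
  have hfi : Integrable f D :=
    .of_bound hf 1 (.of_forall fun z => abs_le.2 ⟨by linarith [(hf01 z).1], (hf01 z).2⟩)
  have one_le : 1 ≤ ENNReal.ofReal (maurerSum (Fintype.card ι)) :=
    ENNReal.one_le_ofReal.2 (one_le_maurerSum _)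
  have mean_nonneg : 0 ≤ ∫ z, f z ∂D := integral_nonneg fun z => (hf01 z).1
  have mean_le_one : ∫ z, f z ∂D ≤ 1 := by
    simpa using integral_mono hfi (integrable_const 1) fun z => (hf01 z).2
  rcases mean_nonneg.eq_or_lt with mean_eq_zero | mean_pos
  · have : f =ᵐ[D] fun _ => 0 :=
      (integral_eq_zero_iff_of_nonneg (fun z => (hf01 z).1) hfi).1 mean_eq_zero.symm
    exact (lintegral_exp_mul_binKL_mean_le_of_ae_eq_const this).trans one_le
  rcases mean_le_one.eq_or_lt with mean_eq_one | mean_lt_one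
  · have : f =ᵐ[D] fun _ => 1 :=
      (integral_eq_iff_of_ae_le hfi (integrable_const 1) (.of_forall fun z => (hf01 z).2)).1
        (by simpa using mean_eq_one)
    exact (lintegral_exp_mul_binKL_mean_le_of_ae_eq_const this).trans one_le
  have mean_mem : ∫ z, f z ∂D ∈ Set.Ioo 0 1 := ⟨mean_pos, mean_lt_one⟩
  refine (lintegral_map_mean_le hfi hf01
    (convexOn_exp_mul_binKL mean_mem (Nat.cast_nonneg _)) fun _ => (exp_pos _).le).trans_eq ?_
  congr 1
  refine sum_congr rfl fun k hk => ?_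
  rw [pow_mul_pow_mul_exp_mul_binKL mean_mem (Nat.lt_succ_iff.1 (mem_range.1 hk))]

end EmpiricalMean

section PosteriorBound

variable {Ω H : Type*} [MeasurableSpace Ω] [MeasurableSpace H]

theorem measure_sq_le_mul_le {μ : Measure Ω} {X Y : Ω → ℝ≥0∞} (hX : AEMeasurable X μ)
    (hY : AEMeasurable Y μ) {ε : ℝ≥0∞} (hε0 : ε ≠ 0) (hε : ε ≠ ∞) :
    μ {a | ε ^ 2 ≤ X a * Y a} ≤
      (∫⁻ a, X a ∂μ) ^ (1 / 2 : ℝ) * (∫⁻ a, Y a ∂μ) ^ (1 / 2 : ℝ) / ε := by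
  have half_nonneg : (0 : ℝ) ≤ 1 / 2 := by norm_num
  have le_of_sq_le (a : Ω) (ha : ε ^ 2 ≤ X a * Y a) :
      ε ≤ X a ^ (1 / 2 : ℝ) * Y a ^ (1 / 2 : ℝ) := by
    rw [← ENNReal.mul_rpow_of_nonneg _ _ half_nonneg]
    calc ε = (ε ^ 2) ^ (1 / 2 : ℝ) := by rw [← ENNReal.rpow_natCast_mul]; norm_num
      _ ≤ _ := ENNReal.rpow_le_rpow ha half_nonneg
  calc μ {a | ε ^ 2 ≤ X a * Y a}
      ≤ μ {a | ε ≤ X a ^ (1 / 2 : ℝ) * Y a ^ (1 / 2 : ℝ)} := measure_mono le_of_sq_le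
    _ ≤ (∫⁻ a, X a ^ (1 / 2 : ℝ) * Y a ^ (1 / 2 : ℝ) ∂μ) / ε :=
        meas_ge_le_lintegral_div ((hX.pow_const _).mul (hY.pow_const _)) hε0 hε
    _ ≤ _ := by
        gcongr
        exact ENNReal.lintegral_mul_norm_pow_le hX hY half_nonneg half_nonneg (by norm_num)

variable {ν : Measure Ω} {P : Measure H} {κ : Kernel Ω H} {ρ F : Ω × H → ℝ≥0∞}

theorem lintegral_compProd_div_density [SFinite ν] [SFinite P] [IsSFiniteKernel κ]
    (hρ : Measurable ρ) (hρ0 : ∀ q, ρ q ≠ 0) (hρt : ∀ q, ρ q ≠ ∞)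
    (hκ : ∀ ω, κ ω = P.withDensity fun h => ρ (ω, h)) (hF : Measurable F) :
    ∫⁻ q, F q / ρ q ∂(ν ⊗ₘ κ) = ∫⁻ h, ∫⁻ ω, F (ω, h) ∂ν ∂P := by
  have inner_eq (ω : Ω) : ∫⁻ h, F (ω, h) / ρ (ω, h) ∂κ ω = ∫⁻ h, F (ω, h) ∂P := by
    rw [hκ, lintegral_withDensity_eq_lintegral_mul _ (by fun_prop) (by fun_prop)]
    exact lintegral_congr fun h => ENNReal.mul_div_cancel (hρ0 _) (hρt _)
  rw [Measure.lintegral_compProd (by fun_prop), lintegral_congr inner_eq,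
    lintegral_lintegral_swap (f := fun ω h => F (ω, h)) hF.aemeasurable]

theorem lintegral_prod_density [IsProbabilityMeasure ν] [SFinite P] [IsMarkovKernel κ]
    (hρ : Measurable ρ) (hκ : ∀ ω, κ ω = P.withDensity fun h => ρ (ω, h)) :
    ∫⁻ p, ρ (p.2.1, p.1) ∂P.prod (ν ⊗ₘ κ) = 1 := by
  have inner_eq (ω : Ω) : ∫⁻ h, ρ (ω, h) ∂P = 1 := by
    rw [← setLIntegral_univ, ← withDensity_apply _ .univ, ← hκ, measure_univ]
  rw [lintegral_prod_symm _ (by fun_prop)]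
  simp [inner_eq]

theorem measure_sq_le_div_density_mul_density_le [IsProbabilityMeasure ν] [IsProbabilityMeasure P]
    [IsMarkovKernel κ] (hρ : Measurable ρ) (hρ0 : ∀ q, ρ q ≠ 0) (hρt : ∀ q, ρ q ≠ ∞)
    (hκ : ∀ ω, κ ω = P.withDensity fun h => ρ (ω, h)) (hF : Measurable F)
    {ε : ℝ≥0∞} (hε0 : ε ≠ 0) (hε : ε ≠ ∞) :
    P.prod (ν ⊗ₘ κ) {p | ε ^ 2 ≤ F p.2 / ρ p.2 * ρ (p.2.1, p.1)} ≤
      (∫⁻ h, ∫⁻ ω, F (ω, h) ∂ν ∂P) ^ (1 / 2 : ℝ) / ε := by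
  have lintegral_ratio : ∫⁻ p, F p.2 / ρ p.2 ∂P.prod (ν ⊗ₘ κ) = ∫⁻ h, ∫⁻ ω, F (ω, h) ∂ν ∂P := by
    rw [lintegral_prod _ (by fun_prop)]
    simp [lintegral_compProd_div_density hρ hρ0 hρt hκ hF]
  have markov := measure_sq_le_mul_le (μ := P.prod (ν ⊗ₘ κ)) (X := fun p => F p.2 / ρ p.2)
    (Y := fun p => ρ (p.2.1, p.1)) (by fun_prop) (by fun_prop) hε0 hε
  rwa [lintegral_ratio, lintegral_prod_density hρ hκ, ENNReal.one_rpow, mul_one] at markov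

end PosteriorBound

section GibbsPosterior

variable {Ω H : Type*} [MeasurableSpace H]

theorem tilted_smul_measure (μ : Measure H) (f : H → ℝ) {c : ℝ≥0∞} (hc0 : c ≠ 0) (hc : c ≠ ∞) :
    (c • μ).tilted f = μ.tilted f := by
  rw [Measure.tilted, withDensity_smul_measure, ← withDensity_smul' _ _ hc]
  congr 1 with h
  have hcR : 0 < c.toReal := ENNReal.toReal_pos hc0 hc
  rw [Pi.smul_apply, smul_eq_mul, integral_smul_measure, smul_eq_mul, ← ENNReal.ofReal_toReal hc,
    ← ENNReal.ofReal_mul hcR.le, ENNReal.toReal_ofReal hcR.le]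
  congr 1
  field_simp

/-- The density at `(ω, h)`, with respect to the prior `P`, of the Gibbs posterior with potential
`V` given the data `ω`. It is the density of `P.tilted fun h => -V h ω`. -/
noncomputable def gibbsDensity (P : Measure H) (V : H → Ω → ℝ) (q : Ω × H) : ℝ≥0∞ :=
  ENNReal.ofReal (exp (-V q.2 q.1) / ∫ g, exp (-V g q.1) ∂P)

variable {P : Measure H} {V : H → Ω → ℝ}

theorem measurable_gibbsDensity [MeasurableSpace Ω] [SFinite P]
    (hV : Measurable (Function.uncurry V)) : Measurable (gibbsDensity P V) := by
  have hexp : Measurable fun q : Ω × H => exp (-V q.2 q.1) := (hV.comp measurable_swap).neg.exp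
  have hnorm : Measurable fun ω => ∫ g, exp (-V g ω) ∂P :=
    hexp.stronglyMeasurable.integral_prod_right'.measurable
  exact (hexp.div (hnorm.comp measurable_fst)).ennreal_ofReal

theorem gibbsDensity_ne_zero [NeZero P] (hint : ∀ ω, Integrable (fun h => exp (-V h ω)) P)
    (q : Ω × H) : gibbsDensity P V q ≠ 0 :=
  (ENNReal.ofReal_pos.2 (div_pos (exp_pos _) (integral_exp_pos (hint q.1)))).ne'

theorem ofReal_exp_div_gibbsDensity_mul_gibbsDensity [NeZero P] {ω : Ω}
    (hint : Integrable (fun h => exp (-V h ω)) P) (a : ℝ) (h h' : H) :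
    ENNReal.ofReal (exp a) / gibbsDensity P V (ω, h) * gibbsDensity P V (ω, h') =
      ENNReal.ofReal (exp (a + V h ω - V h' ω)) := by
  have hnorm : 0 < ∫ g, exp (-V g ω) ∂P := integral_exp_pos hint
  rw [gibbsDensity, gibbsDensity, ← ENNReal.ofReal_div_of_pos (by positivity),
    ← ENNReal.ofReal_mul (by positivity), exp_sub, exp_add, exp_neg, exp_neg]
  congr 1
  field_simp

theorem one_sub_le_measure_le_gibbs_potential_sub [MeasurableSpace Ω] [IsProbabilityMeasure P]
    {ν : Measure Ω} [IsProbabilityMeasure ν] {κ : Kernel Ω H} {Φ : H → Ω → ℝ} {C δ : ℝ}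
    (hV : Measurable (Function.uncurry V)) (hint : ∀ ω, Integrable (fun h => exp (-V h ω)) P)
    (hκ : ∀ ω, κ ω = P.tilted fun h => -V h ω) (hΦ : Measurable (Function.uncurry Φ)) (hC : 0 < C)
    (hΦC : ∫⁻ h, ∫⁻ ω, ENNReal.ofReal (exp (Φ h ω)) ∂ν ∂P ≤ ENNReal.ofReal C) (hδ : 0 < δ) :
    1 - ENNReal.ofReal δ ≤ P.prod (ν ⊗ₘ κ)
      {p | Φ p.2.2 p.2.1 ≤ V p.1 p.2.1 - V p.2.2 p.2.1 + log (C / δ ^ 2)} := by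
  have : IsMarkovKernel κ := ⟨fun ω => hκ ω ▸ isProbabilityMeasure_tilted (hint ω)⟩
  have hΦexp : Measurable fun q : Ω × H => ENNReal.ofReal (exp (Φ q.2 q.1)) :=
    (hΦ.comp measurable_swap).exp.ennreal_ofReal
  set good := {p : H × Ω × H | Φ p.2.2 p.2.1 ≤ V p.1 p.2.1 - V p.2.2 p.2.1 + log (C / δ ^ 2)}
  have compl_subset : goodᶜ ⊆ {p | ENNReal.ofReal (√C / δ) ^ 2 ≤
      ENNReal.ofReal (exp (Φ p.2.2 p.2.1)) / gibbsDensity P V p.2 *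
        gibbsDensity P V (p.2.1, p.1)} := by
    intro p hp
    have hlt : V p.1 p.2.1 - V p.2.2 p.2.1 + log (C / δ ^ 2) < Φ p.2.2 p.2.1 := not_le.1 hp
    rw [Set.mem_ofPred_eq, ofReal_exp_div_gibbsDensity_mul_gibbsDensity (hint _),
      ← ENNReal.ofReal_pow (by positivity), div_pow, sq_sqrt hC.le]
    exact ENNReal.ofReal_le_ofReal ((log_le_iff_le_exp (by positivity)).1 (by linarith))
  have measure_compl_le : P.prod (ν ⊗ₘ κ) goodᶜ ≤ ENNReal.ofReal δ :=
    calc P.prod (ν ⊗ₘ κ) goodᶜ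
        ≤ (∫⁻ h, ∫⁻ ω, ENNReal.ofReal (exp (Φ h ω)) ∂ν ∂P) ^ (1 / 2 : ℝ) /
            ENNReal.ofReal (√C / δ) :=
          (measure_mono compl_subset).trans <|
            measure_sq_le_div_density_mul_density_le (measurable_gibbsDensity hV)
              (gibbsDensity_ne_zero hint) (fun _ => ENNReal.ofReal_ne_top) hκ hΦexp
              (ENNReal.ofReal_pos.2 (by positivity)).ne' ENNReal.ofReal_ne_top
      _ ≤ ENNReal.ofReal C ^ (1 / 2 : ℝ) / ENNReal.ofReal (√C / δ) := by gcongr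
      _ = ENNReal.ofReal δ := by
          rw [ENNReal.ofReal_rpow_of_pos hC, ← sqrt_eq_rpow,
            ← ENNReal.ofReal_div_of_pos (by positivity), div_div_cancel₀ (by positivity)]
  rw [tsub_le_iff_right]
  calc (1 : ℝ≥0∞) = P.prod (ν ⊗ₘ κ) Set.univ := measure_univ.symm
    _ ≤ P.prod (ν ⊗ₘ κ) good + P.prod (ν ⊗ₘ κ) goodᶜ := measure_univ_le_add_compl good
    _ ≤ P.prod (ν ⊗ₘ κ) good + ENNReal.ofReal δ := by gcongr

end GibbsPosterior

section Risk

theorem measurable_binKL : Measurable (Function.uncurry binKL) := by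
  unfold binKL Function.uncurry
  fun_prop

variable {H Z : Type*} [MeasurableSpace Z] {ℓ : H → Z → ℝ}

theorem lintegral_exp_mul_binKL_risk_le (D : Measure Z) [IsProbabilityMeasure D] {m : ℕ}
    (hm : m ≠ 0) {h : H} (hℓ : Measurable (ℓ h)) (hℓ01 : ∀ z, ℓ h z ∈ Set.Icc 0 1) :
    ∫⁻ S, ENNReal.ofReal (exp (m * binKL (empRisk ℓ h S) (trueRisk D ℓ h)))
      ∂Measure.pi (fun _ : Fin m => D) ≤ ENNReal.ofReal (8 * √m) := by
  have maurer := lintegral_exp_mul_binKL_mean_le (ι := Fin m) (D := D)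
    hℓ.aestronglyMeasurable hℓ01
  rw [Fintype.card_fin] at maurer
  exact maurer.trans (ENNReal.ofReal_le_ofReal (maurerSum_le_eight_mul_sqrt hm))

variable [MeasurableSpace H]

theorem measurable_trueRisk (D : Measure Z) [SFinite D] (hℓ : Measurable (Function.uncurry ℓ)) :
    Measurable (trueRisk D ℓ) :=
  hℓ.stronglyMeasurable.integral_prod_right'.measurable

theorem measurable_empRisk {m : ℕ} (hℓ : Measurable (Function.uncurry ℓ)) :
    Measurable fun q : H × (Fin m → Z) => empRisk ℓ q.1 q.2 := by
  refine .div_const (measurable_sum _ fun i _ => ?_) _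
  exact hℓ.comp (measurable_fst.prodMk ((measurable_pi_apply i).comp measurable_snd))

theorem measurable_binKL_risk (D : Measure Z) [SFinite D] {m : ℕ}
    (hℓ : Measurable (Function.uncurry ℓ)) :
    Measurable fun q : H × (Fin m → Z) => binKL (empRisk ℓ q.1 q.2) (trueRisk D ℓ q.1) :=
  measurable_binKL.comp
    ((measurable_empRisk hℓ).prodMk ((measurable_trueRisk D hℓ).comp measurable_fst))

end Risk

/-- **Practical bound with uniform prior.**  `H` has finite positive reference
measure and `P` is the uniform probability distribution on `H`.  With
probability at least `1−δ` over `S ∼ D^m`, `h′ ∼ P` and `h ∼ Q_S`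
(Gibbs posterior for `μ`),
`kl(R_S^ℓ(h) ‖ R_D^ℓ(h)) ≤ (1/m)·[μ(h′,S) − μ(h,S) + ln(8√m/δ²)]`. -/
theorem gibbs_complexity_kl_bound_uniform_prior
    {Z H : Type*} [MeasurableSpace Z] [MeasurableSpace H]
    (m : ℕ) (hm : 0 < m)
    (D : Measure Z) [IsProbabilityMeasure D]
    (lam : Measure H)
    (hlam_pos : 0 < lam Set.univ) (hlam_fin : lam Set.univ < ⊤)
    (ℓ : H → Z → ℝ) (hℓ : Measurable (Function.uncurry ℓ))
    (hℓ01 : ∀ h z, ℓ h z ∈ Set.Icc (0:ℝ) 1)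
    (μ : H → (Fin m → Z) → ℝ) (hμ : Measurable (Function.uncurry μ))
    (hμint : ∀ S, Integrable (fun g => Real.exp (-(μ g S))) lam)
    (hZpos : ∀ S : Fin m → Z, 0 < ∫ g, Real.exp (-(μ g S)) ∂lam)
    (κ : Kernel (Fin m → Z) H) [IsMarkovKernel κ]
    (hκ : ∀ S, κ S = lam.withDensity fun h =>
      ENNReal.ofReal (Real.exp (-(μ h S)) / ∫ g, Real.exp (-(μ g S)) ∂lam))
    (δ : ℝ) (hδ : δ ∈ Set.Ioc (0:ℝ) 1) :
    1 - ENNReal.ofReal δ ≤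
      ((((lam Set.univ)⁻¹ • lam).prod
          (Measure.pi (fun _ : Fin m => D) ⊗ₘ κ))
        {p : H × ((Fin m → Z) × H) |
          binKL (empRisk ℓ p.2.2 p.2.1) (trueRisk D ℓ p.2.2) ≤
            (1 / m) * (μ p.1 p.2.1 - μ p.2.2 p.2.1
              + Real.log (8 * Real.sqrt m / δ^2)) }) := by
  have hm' : (0 : ℝ) < m := by exact_mod_cast hm
  have : IsFiniteMeasure lam := ⟨hlam_fin⟩
  have : NeZero lam := ⟨Measure.measure_univ_pos.1 hlam_pos⟩
  set P := (lam Set.univ)⁻¹ • lam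
  have inv_ne_top : (lam Set.univ)⁻¹ ≠ ∞ := ENNReal.inv_ne_top.2 hlam_pos.ne'
  have posterior_eq (S : Fin m → Z) : κ S = P.tilted fun h => -μ h S :=
    (hκ S).trans
      (tilted_smul_measure lam _ (ENNReal.inv_ne_zero.2 hlam_fin.ne) inv_ne_top).symm
  have exp_moment_le : ∫⁻ h, ∫⁻ S,
      ENNReal.ofReal (exp (m * binKL (empRisk ℓ h S) (trueRisk D ℓ h)))
        ∂Measure.pi (fun _ : Fin m => D) ∂P ≤ ENNReal.ofReal (8 * √m) :=
    (lintegral_mono fun h => lintegral_exp_mul_binKL_risk_le D hm.ne'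
      (hℓ.comp measurable_prodMk_left) (hℓ01 h)).trans_eq (by simp)
  have bound := one_sub_le_measure_le_gibbs_potential_sub hμ
    (fun S => (hμint S).smul_measure inv_ne_top) posterior_eq
    ((measurable_binKL_risk D hℓ).const_mul (m : ℝ)) (by positivity) exp_moment_le hδ.1
  simpa only [one_div, le_inv_mul_iff₀ hm'] using bound
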